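/- Let k be a nonnegative integer with k ≥ 2, Ω ⊆ ℝ a nonempty open set, and D : C^k(Ω) → C(Ω) an operator satisfying the identity (★): D(f·g·h) − f·D(g·h) − g·D(f·h) − h·D(f·g) + f·g·D(h) + f·h·D(g) + g·h·D(f) = 0 for all f, g, h ∈ C^k(Ω), and suppose that D annihilates all polynomials of degree at most 1, i.e. D(f) = 0 whenever f is the restriction to Ω of an affine function x ↦ a·x + b. Then there exists a continuous function c₂ : Ω → ℝ such that D(f)(x) = c₂(x)·f''(x) for all f ∈ C^k(Ω) and x ∈ Ω. Moreover, if k ∈ {0, 1} then D = 0. -/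

import Mathlib

/-!
No additivity of `D` is assumed, so regularity has to come from continuity of the functions `D f`.

Testing the identity against cutoffs shows that `D` is local, and gluing two functions with the
same `k`-jet at a point shows that `D f x` depends only on the `k`-jet of `f` at `x`
(`IsLocalOp.jet`). For `k ≤ 1` this already gives `D f x = D (affine) x = 0`.

For `k ≥ 2`, put `B f h = D (f h) - f D h - h D f`. The identity says precisely that `B` satisfies
the Leibniz rule in each variable. The main tool is `leibniz_eq_deriv`: an operator
`T : C^k → C(Ω)` satisfying the Leibniz rule and annihilating the constants is `T f = T(id) f'`.
Applying it twice gives `B f h = d f' h'` with `d = B(id, id)`. Hence `f ↦ D f - (d / 2) f''`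
satisfies the Leibniz rule and annihilates affine functions, so it vanishes, and `c₂ = d / 2`.

For the tool itself: `u ↦ T (exp u) / exp u` is additive and local. A gliding-hump argument makes
it `ℝ`-linear (`IsLocalOp.homogeneous`), so by dependence on jets it is a differential operator
`∑ cᵢ u⁽ⁱ⁾` with continuous coefficients (`IsLocalOp.eq_sum_jetCoeff`). Substituting `u = log |y - a|`
and letting `y → a`, continuity of `T (y ↦ y - a)` at its zero `a` kills all `cᵢ` with `i ≥ 2`
(`jetCoeff_logOp_eq_zero`), while `c₀ = 0` because constants are annihilated.
-/

open Filter Topology Set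

/-! ### Local operators and their dependence on jets -/

/-- An operator on `C^k(ℝ)` with values continuous on `Ω` whose value at `x ∈ Ω` depends only on
the germ of the argument at `x`. No additivity is assumed. -/
structure IsLocalOp (k : ℕ) (Ω : Set ℝ) (S : (ℝ → ℝ) → ℝ → ℝ) : Prop where
  cont : ∀ f, ContDiff ℝ k f → ContinuousOn (S f) Ω
  loc : ∀ f g, ContDiff ℝ k f → ContDiff ℝ k g → ∀ x ∈ Ω, f =ᶠ[𝓝 x] g → S f x = S g x

lemma exists_cutoff {x : ℝ} {U : Set ℝ} (hU : U ∈ 𝓝 x) :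
    ∃ χ : ℝ → ℝ, (∀ k : ℕ, ContDiff ℝ k χ) ∧ tsupport χ ⊆ U ∧ (∀ y, 0 ≤ χ y) ∧
      (∀ y, χ y ≤ 1) ∧ ∀ᶠ y in 𝓝 x, χ y = 1 := by
  obtain ⟨ε, hε, hb⟩ := Metric.mem_nhds_iff.1 hU
  let b : ContDiffBump x := ⟨ε / 4, ε / 2, by positivity, by linarith⟩
  refine ⟨b, fun k => b.contDiff, ?_, fun y => b.nonneg, fun y => b.le_one, b.eventuallyEq_one⟩
  rw [b.tsupport_eq]
  exact (Metric.closedBall_subset_ball (by change ε / 2 < ε; linarith)).trans hb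

/-- A `C^k` function that is flat to order `k` at `a` may be replaced by `0` to the left of `a`. -/
lemma contDiff_indicator_Ioi (a : ℝ) (k : ℕ) : ∀ w : ℝ → ℝ, ContDiff ℝ k w →
    (∀ i ≤ k, iteratedDeriv i w a = 0) → ContDiff ℝ k ((Ioi a).indicator w) := by
  induction k with
  | zero =>
    intro w hw h0
    have h0 : w a = 0 := by simpa using h0 0 le_rfl
    have hw : Continuous w := hw.continuous
    have : (Ioi a).indicator w = fun x => w (max x a) := by
      ext x
      by_cases hx : a < x
      · simp [hx, hx.le]
      · simp [hx, not_lt.1 hx, h0]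
    rw [this]
    exact contDiff_zero.2 (by fun_prop)
  | succ k ih =>
    intro w hw h0
    have hw' := hw
    rw [show ((k + 1 : ℕ) : WithTop ℕ∞) = k + 1 by push_cast; rfl, contDiff_succ_iff_deriv] at hw
    obtain ⟨hd, -, hw1⟩ := hw
    have key : ∀ x, HasDerivAt ((Ioi a).indicator w) ((Ioi a).indicator (deriv w) x) x := by
      intro x
      rcases lt_trichotomy x a with hx | rfl | hx
      · have : (Ioi a).indicator w =ᶠ[𝓝 x] fun _ => 0 := by
          filter_upwards [Iio_mem_nhds hx] with y hy
          simp [le_of_lt (mem_Iio.1 hy)]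
        rw [indicator_of_notMem (by simpa using hx.le)]
        exact (hasDerivAt_const x (0 : ℝ)).congr_of_eventuallyEq this
      · have hwx : w x = 0 := by simpa using h0 0 (by simp)
        have hdx : deriv w x = 0 := by simpa using h0 1 (by simp)
        have h := (hd x).hasDerivAt
        rw [hdx] at h
        rw [hasDerivAt_iff_isLittleO] at h ⊢
        simp only [hwx, sub_zero, smul_zero, mem_Ioi, lt_irrefl, not_false_iff,
          indicator_of_notMem] at h ⊢
        refine Asymptotics.IsBigO.trans_isLittleO (Asymptotics.IsBigO.of_bound 1 ?_) h
        filter_upwards with y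
        rw [one_mul]
        exact norm_indicator_le_norm_self _ _
      · have : (Ioi a).indicator w =ᶠ[𝓝 x] w := by
          filter_upwards [Ioi_mem_nhds hx] with y hy
          simp [mem_Ioi.1 hy]
        rw [indicator_of_mem (by simpa using hx)]
        exact (hd x).hasDerivAt.congr_of_eventuallyEq this
    rw [show ((k + 1 : ℕ) : WithTop ℕ∞) = k + 1 by push_cast; rfl, contDiff_succ_iff_deriv]
    refine ⟨fun x => (key x).differentiableAt, by simp, ?_⟩
    rw [show deriv ((Ioi a).indicator w) = (Ioi a).indicator (deriv w) from
      funext fun x => (key x).deriv]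
    refine ih _ hw1 fun i hi => ?_
    rw [← iteratedDeriv_succ']
    exact h0 (i + 1) (by omega)

/-- A local operator sees only the `k`-jet: gluing `f` on the left of `x` to `g` on the right
produces a `C^k` function, and continuity of its image at `x` forces the two values to agree. -/
lemma IsLocalOp.jet {k : ℕ} {Ω : Set ℝ} (hΩ : IsOpen Ω) {S : (ℝ → ℝ) → ℝ → ℝ}
    (hS : IsLocalOp k Ω S) {f g : ℝ → ℝ} (hf : ContDiff ℝ k f) (hg : ContDiff ℝ k g) {x : ℝ}
    (hx : x ∈ Ω) (h : ∀ i ≤ k, iteratedDeriv i f x = iteratedDeriv i g x) : S f x = S g x := by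
  have hgf : ContDiff ℝ k (g - f) := hg.sub hf
  have hi := contDiff_indicator_Ioi x k (g - f) hgf fun i hi => by
    rw [iteratedDeriv_sub ((hg.of_le (by exact_mod_cast hi)).contDiffAt)
      ((hf.of_le (by exact_mod_cast hi)).contDiffAt), h i hi, sub_self]
  set q := f + (Ioi x).indicator (g - f) with hq
  have hqc : ContDiff ℝ k q := hf.add hi
  have cont : ∀ u, ContDiff ℝ k u → ContinuousAt (S u) x := fun u hu =>
    (hS.cont u hu).continuousAt (hΩ.mem_nhds hx)
  have h1 : S q x = S f x := by
    refine tendsto_nhds_unique_of_eventuallyEq (l := 𝓝[<] x)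
      ((cont q hqc).tendsto.mono_left nhdsWithin_le_nhds)
      ((cont f hf).tendsto.mono_left nhdsWithin_le_nhds) ?_
    filter_upwards [self_mem_nhdsWithin, nhdsWithin_le_nhds (hΩ.mem_nhds hx)] with y hy hyΩ
    refine hS.loc _ _ hqc hf y hyΩ ?_
    filter_upwards [Iio_mem_nhds hy] with z hz
    simp [hq, le_of_lt (mem_Iio.1 hz)]
  have h2 : S q x = S g x := by
    refine tendsto_nhds_unique_of_eventuallyEq (l := 𝓝[>] x)
      ((cont q hqc).tendsto.mono_left nhdsWithin_le_nhds)
      ((cont g hg).tendsto.mono_left nhdsWithin_le_nhds) ?_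
    filter_upwards [self_mem_nhdsWithin, nhdsWithin_le_nhds (hΩ.mem_nhds hx)] with y hy hyΩ
    refine hS.loc _ _ hqc hg y hyΩ ?_
    filter_upwards [Ioi_mem_nhds hy] with z hz
    simp [hq, mem_Ioi.1 hz]
  exact h1.symm.trans h2

/-! ### Additive local operators are differential operators -/

lemma exists_large_of_not_linear (φ : ℝ → ℝ) (hadd : ∀ s t, φ (s + t) = φ s + φ t) {c : ℝ}
    (hc : φ c ≠ c * φ 1) {δ : ℝ} (hδ : 0 < δ) (n : ℝ) : ∃ y, |y| < δ ∧ n < |φ y| := by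
  by_contra! hcon
  let F : ℝ →+ ℝ := AddMonoidHom.mk' φ hadd
  have hF : Continuous F := by
    refine F.continuous_of_isBounded_nhds_zero (Metric.ball_mem_nhds 0 hδ) ?_
    refine isBounded_iff_forall_norm_le.2 ⟨n, ?_⟩
    rintro _ ⟨y, hy, rfl⟩
    exact hcon y (by simpa using hy)
  have := map_real_smul F hF c 1
  simp only [smul_eq_mul, mul_one] at this
  exact hc this

lemma exists_iteratedFDeriv_bound {k : ℕ} {f : ℝ → ℝ} (hf : ContDiff ℝ k f)
    (hs : HasCompactSupport f) :
    ∃ M : ℝ, 0 < M ∧ ∀ i ≤ k, ∀ x, ‖iteratedFDeriv ℝ i f x‖ ≤ M := by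
  have h : ∀ i, ∃ C : ℝ, i ≤ k → ∀ x, ‖iteratedFDeriv ℝ i f x‖ ≤ C := by
    intro i
    by_cases hi : i ≤ k
    · obtain ⟨C, hC⟩ := (hs.iteratedFDeriv (𝕜 := ℝ) i).exists_bound_of_continuous
        (hf.continuous_iteratedFDeriv (by exact_mod_cast hi))
      exact ⟨C, fun _ => hC⟩
    · exact ⟨0, fun h => absurd h hi⟩
  choose C hC using h
  refine ⟨1 + ∑ i ∈ Finset.range (k + 1), |C i|, by positivity, fun i hi x => ?_⟩
  have h1 : |C i| ≤ ∑ i ∈ Finset.range (k + 1), |C i| :=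
    Finset.single_le_sum (f := fun i => |C i|) (fun _ _ => abs_nonneg _)
      (Finset.mem_range.2 (by omega))
  linarith [hC i hi x, le_abs_self (C i)]

/-- An additive local operator is `ℝ`-homogeneous. A failure at `x₀` persists on a neighbourhood,
so there `c ↦ S (c v) x` is a discontinuous additive function, unbounded near `0`. Superposing
bumps of tiny height at points `xₙ → x₀` gives a `C^k` function whose image is unbounded
along `xₙ`. -/
lemma IsLocalOp.homogeneous {k : ℕ} {Ω : Set ℝ} (hΩ : IsOpen Ω) {S : (ℝ → ℝ) → ℝ → ℝ}
    (hS : IsLocalOp k Ω S)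
    (hadd : ∀ u v, ContDiff ℝ k u → ContDiff ℝ k v → ∀ x ∈ Ω,
      S (fun y => u y + v y) x = S u x + S v x)
    {v : ℝ → ℝ} (hv : ContDiff ℝ k v) {x₀ : ℝ} (hx₀ : x₀ ∈ Ω) (c : ℝ) :
    S (fun y => c * v y) x₀ = c * S v x₀ := by
  by_contra hne
  have hcv : ∀ t : ℝ, ContDiff ℝ k (fun y => t * v y) := fun t => contDiff_const.mul hv
  have hcont : ∀ u, ContDiff ℝ k u → ContinuousAt (S u) x₀ := fun u hu =>
    (hS.cont u hu).continuousAt (hΩ.mem_nhds hx₀)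
  have hev : ∀ᶠ x in 𝓝 x₀, x ∈ Ω ∧ S (fun y => c * v y) x - c * S v x ≠ 0 :=
    (hΩ.eventually_mem hx₀).and
      (((hcont _ (hcv c)).sub ((hcont v hv).const_mul c)).eventually_ne (sub_ne_zero.2 hne))
  obtain ⟨ε, hε, hball⟩ := Metric.eventually_nhds_iff.1
    (hev.mono fun x h => And.intro h.1 (sub_ne_zero.1 h.2))
  set p : ℕ → ℝ := fun n => ε * (1 / 2) ^ (n + 1) with hp
  have hp0 : ∀ n, 0 < p n := fun n => by positivity
  have hps : ∀ n, p (n + 1) = p n / 2 := fun n => by simp only [hp, pow_succ]; ring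
  have hpanti : Antitone p := antitone_nat_of_succ_le fun n => by
    rw [hps]; linarith [hp0 n]
  set X : ℕ → ℝ := fun n => x₀ + p n with hX
  have hpε : ∀ n, p n < ε := fun n => by
    have h0 : p 0 = ε / 2 := by simp only [hp]; ring
    linarith [hpanti (Nat.zero_le n)]
  have hXin : ∀ n, dist (X n) x₀ < ε := fun n => by
    rw [Real.dist_eq, hX]
    simp only [add_sub_cancel_left]
    rw [abs_of_pos (hp0 n)]
    exact hpε n
  have hXt : Tendsto X atTop (𝓝 x₀) := by
    have h1 : Tendsto (fun n : ℕ => ((1 : ℝ) / 2) ^ (n + 1)) atTop (𝓝 0) :=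
      (tendsto_pow_atTop_nhds_zero_of_lt_one (by norm_num) (by norm_num)).comp
        (tendsto_add_atTop_nat 1)
    simpa [hX, hp] using (h1.const_mul ε).const_add x₀
  let b : ∀ n, ContDiffBump (X n) := fun n =>
    ⟨p n / 8, p n / 4, by linarith [hp0 n], by linarith [hp0 n]⟩
  have hdisj : ∀ n m, m ≠ n → ∀ z, |z - X n| < p n / 8 → b m z = 0 := by
    intro n m hmn z hz
    apply (b m).zero_of_le_dist
    change p m / 4 ≤ dist z (X m)
    rw [abs_lt] at hz
    rw [Real.dist_eq]
    simp only [hX] at hz ⊢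
    rcases lt_or_gt_of_ne hmn with h | h
    · have h1 := hpanti (Nat.succ_le_of_lt h)
      rw [Nat.succ_eq_add_one, hps] at h1
      rw [abs_of_nonpos (by linarith [hp0 m])]
      linarith [hp0 m]
    · have h1 := hpanti (Nat.succ_le_of_lt h)
      rw [Nat.succ_eq_add_one, hps] at h1
      rw [abs_of_nonneg (by linarith [hp0 n])]
      linarith [hp0 n]
  have hψ : ∀ n, ContDiff ℝ k (fun y => b n y * v y) := fun n => (b n).contDiff.mul hv
  choose M hM0 hM using fun n => exists_iteratedFDeriv_bound (hψ n)
    ((b n).hasCompactSupport.mul_right (f' := v))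
  have hlarge : ∀ n : ℕ, ∃ y : ℝ, |y| < (1 / 2) ^ n / M n ∧
      (n : ℝ) < |S (fun z => y * v z) (X n)| := by
    intro n
    obtain ⟨hxn, hxn'⟩ := hball (hXin n)
    refine exists_large_of_not_linear (fun y => S (fun z => y * v z) (X n)) ?_ (c := c) ?_
      (div_pos (by positivity) (hM0 n)) n
    · intro s t
      rw [← hadd _ _ (hcv s) (hcv t) _ hxn]
      simp only [add_mul]
    · simpa only [one_mul] using hxn'
  choose y hy hyS using hlarge
  set u : ℝ → ℝ := fun z => ∑' n, y n * (b n z * v z) with hu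
  have huc : ContDiff ℝ k u := by
    have := contDiff_tsum (𝕜 := ℝ) (N := (k : ℕ∞)) (f := fun n z => y n * (b n z * v z))
      (v := fun _ n => (1 / 2 : ℝ) ^ n) (fun n => contDiff_const.mul (hψ n))
      (fun _ _ => summable_geometric_two) ?_
    · exact this
    · intro i n z hi
      have hi' : i ≤ k := by exact_mod_cast hi
      have h1 : iteratedFDeriv ℝ i (fun z => y n * (b n z * v z)) z =
          y n • iteratedFDeriv ℝ i (fun z => b n z * v z) z :=
        iteratedFDeriv_const_smul_apply (a := y n)
          (((hψ n).of_le (by exact_mod_cast hi')).contDiffAt)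
      rw [h1, norm_smul, Real.norm_eq_abs]
      calc |y n| * _ ≤ ((1 / 2) ^ n / M n) * M n :=
            mul_le_mul (hy n).le (hM n i hi' z) (norm_nonneg _)
              (div_nonneg (by positivity) (hM0 n).le)
        _ = _ := div_mul_cancel₀ _ (hM0 n).ne'
  have hloc : ∀ n, S u (X n) = S (fun z => y n * v z) (X n) := by
    intro n
    refine hS.loc _ _ huc (hcv _) _ (hball (hXin n)).1 ?_
    filter_upwards [Metric.ball_mem_nhds (X n) (show 0 < p n / 8 by linarith [hp0 n])] with z hz
    have hz' : |z - X n| < p n / 8 := by simpa [Real.dist_eq] using hz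
    simp only [hu]
    rw [tsum_eq_single n fun m hm => by rw [hdisj n m hm z hz']; ring,
      (b n).one_of_mem_closedBall (Metric.ball_subset_closedBall hz), one_mul]
  have hlim : Tendsto (fun n => |S u (X n)|) atTop (𝓝 |S u x₀|) :=
    ((hcont u huc).tendsto.comp hXt).abs
  refine not_tendsto_nhds_of_tendsto_atTop ?_ _ hlim
  refine tendsto_atTop_mono (fun n => ?_) tendsto_natCast_atTop_atTop
  rw [hloc n]
  exact (hyS n).le

section
variable {k : ℕ} {Ω : Set ℝ} {S : (ℝ → ℝ) → ℝ → ℝ}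

lemma IsLocalOp.map_sum (hΩ : IsOpen Ω) (hS : IsLocalOp k Ω S)
    (hadd : ∀ u v, ContDiff ℝ k u → ContDiff ℝ k v → ∀ x ∈ Ω,
      S (fun y => u y + v y) x = S u x + S v x)
    {x : ℝ} (hx : x ∈ Ω) (s : Finset ℕ) (a : ℕ → ℝ) (g : ℕ → ℝ → ℝ)
    (hg : ∀ i, ContDiff ℝ k (g i)) :
    S (fun y => ∑ i ∈ s, a i * g i y) x = ∑ i ∈ s, a i * S (g i) x := by
  induction s using Finset.induction_on with
  | empty =>
    have := hS.homogeneous hΩ hadd (contDiff_const (c := (0 : ℝ))) hx 0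
    simpa using this
  | insert j s hj ih =>
    simp only [Finset.sum_insert hj]
    rw [hadd _ _ (contDiff_const.mul (hg j))
      (ContDiff.sum fun i _ => contDiff_const.mul (hg i)) x hx, ih,
      hS.homogeneous hΩ hadd (hg j) hx]

/-- The coefficient of the `i`-th derivative in an additive local operator. -/
noncomputable def jetCoeff (S : (ℝ → ℝ) → ℝ → ℝ) (i : ℕ) (x : ℝ) : ℝ :=
  S (fun y => (y - x) ^ i) x / i.factorial

/-- The binomial expansion of `(y - x) ^ i` exhibits the coefficients as finite combinations of
the continuous functions `S (y ↦ y ^ m)`. -/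
lemma continuousOn_jetCoeff (hΩ : IsOpen Ω) (hS : IsLocalOp k Ω S)
    (hadd : ∀ u v, ContDiff ℝ k u → ContDiff ℝ k v → ∀ x ∈ Ω,
      S (fun y => u y + v y) x = S u x + S v x) (i : ℕ) :
    ContinuousOn (jetCoeff S i) Ω := by
  have h : ∀ x ∈ Ω, jetCoeff S i x = (∑ m ∈ Finset.range (i + 1),
      ((-x) ^ (i - m) * i.choose m) * S (fun y => y ^ m) x) / i.factorial := by
    intro x hx
    rw [← hS.map_sum hΩ hadd hx _ _ (fun m y => y ^ m) fun m => contDiff_id.pow m]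
    unfold jetCoeff
    congr 3
    ext y
    rw [sub_eq_add_neg, add_pow]
    exact Finset.sum_congr rfl fun m _ => by ring
  refine ContinuousOn.congr ?_ h
  refine ContinuousOn.div_const (continuousOn_finsetSum _ fun m _ => ContinuousOn.mul ?_ ?_) _
  · fun_prop
  · exact hS.cont _ (contDiff_id.pow m)

lemma iteratedDeriv_sub_pow (i j : ℕ) (x : ℝ) :
    iteratedDeriv j (fun y : ℝ => (y - x) ^ i) x = if j = i then (i.factorial : ℝ) else 0 := by
  have := congrFun (iteratedDeriv_comp_sub_const j (fun y : ℝ => y ^ i) x) x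
  rw [this]
  simp only [sub_self]
  rw [iteratedDeriv_fun_pow_zero]
  split_ifs <;> simp

/-- An additive local operator is a linear differential operator of order at most `k`. -/
lemma IsLocalOp.eq_sum_jetCoeff (hΩ : IsOpen Ω) (hS : IsLocalOp k Ω S)
    (hadd : ∀ u v, ContDiff ℝ k u → ContDiff ℝ k v → ∀ x ∈ Ω,
      S (fun y => u y + v y) x = S u x + S v x)
    {u : ℝ → ℝ} (hu : ContDiff ℝ k u) {x : ℝ} (hx : x ∈ Ω) :
    S u x = ∑ i ∈ Finset.range (k + 1), jetCoeff S i x * iteratedDeriv i u x := by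
  have hg : ∀ i : ℕ, ∀ n : WithTop ℕ∞, ContDiff ℝ n fun y : ℝ => (y - x) ^ i :=
    fun i n => (contDiff_id.sub contDiff_const).pow i
  have h1 := hS.map_sum hΩ hadd hx (Finset.range (k + 1))
    (fun i => iteratedDeriv i u x / i.factorial) (fun i y => (y - x) ^ i) fun i => hg i _
  have h2 : S u x = S (fun y => ∑ i ∈ Finset.range (k + 1),
      iteratedDeriv i u x / i.factorial * (y - x) ^ i) x := by
    refine hS.jet hΩ hu (ContDiff.sum fun i _ => contDiff_const.mul (hg i _)) hx fun j hj => ?_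
    rw [iteratedDeriv_fun_sum fun i _ => (contDiff_const.mul (hg i _)).contDiffAt]
    simp only [iteratedDeriv_const_mul_field, iteratedDeriv_sub_pow]
    rw [Finset.sum_eq_single_of_mem j (Finset.mem_range.2 (by omega))]
    · simp [Nat.factorial_ne_zero]
    · intro i _ hi
      simp [hi.symm]
  rw [h2, h1]
  refine Finset.sum_congr rfl fun i _ => ?_
  unfold jetCoeff
  ring
end

/-! ### Operators satisfying the Leibniz rule -/

lemma iteratedDeriv_log_succ (i : ℕ) (y : ℝ) :
    iteratedDeriv (i + 1) Real.log y = (-1) ^ i * (i.factorial : ℝ) * y ^ (-1 - i : ℤ) := by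
  rw [iteratedDeriv_succ', Real.deriv_log', iteratedDeriv_eq_iterate]
  exact iter_deriv_inv i y

/-- Multiplication of two functions that agree near `x` by a cutoff supported there gives the same
function, so the Leibniz rule forces locality. -/
lemma isLocalOp_of_leibniz {k : ℕ} {Ω : Set ℝ} {T : (ℝ → ℝ) → ℝ → ℝ}
    (hcont : ∀ f, ContDiff ℝ k f → ContinuousOn (T f) Ω)
    (hleib : ∀ f g, ContDiff ℝ k f → ContDiff ℝ k g → ∀ x ∈ Ω,
      T (fun y => f y * g y) x = f x * T g x + g x * T f x) : IsLocalOp k Ω T := by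
  refine ⟨hcont, fun f g hf hg x hx hfg => ?_⟩
  obtain ⟨χ, hχ, hsupp, -, -, h1⟩ := exists_cutoff hfg
  have heq : (fun y => f y * χ y) = fun y => g y * χ y := by
    ext y
    by_cases hy : y ∈ tsupport χ
    · have : f y = g y := hsupp hy
      rw [this]
    · simp [image_eq_zero_of_notMem_tsupport hy]
  have hf1 := hleib f χ hf (hχ k) x hx
  have hg1 := hleib g χ hg (hχ k) x hx
  rw [heq, hg1, h1.self_of_nhds, hfg.self_of_nhds] at hf1
  linarith

section
variable {k : ℕ} {Ω : Set ℝ} {T : (ℝ → ℝ) → ℝ → ℝ}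

/-- The Leibniz operator `T` in the logarithmic coordinate `u = log f`. -/
noncomputable def logOp (T : (ℝ → ℝ) → ℝ → ℝ) (u : ℝ → ℝ) (x : ℝ) : ℝ :=
  T (fun y => Real.exp (u y)) x / Real.exp (u x)

lemma isLocalOp_logOp (hT : IsLocalOp k Ω T) : IsLocalOp k Ω (logOp T) := by
  refine ⟨fun u hu => ?_, fun u v hu hv x hx huv => ?_⟩
  · exact (hT.cont _ hu.exp).div hu.continuous.rexp.continuousOn fun x _ => (Real.exp_pos _).ne'
  · unfold logOp
    rw [huv.self_of_nhds, hT.loc _ _ hu.exp hv.exp x hx (huv.mono fun y hy => by simp only [hy])]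

lemma logOp_add
    (hleib : ∀ f g, ContDiff ℝ k f → ContDiff ℝ k g → ∀ x ∈ Ω,
      T (fun y => f y * g y) x = f x * T g x + g x * T f x) (u v : ℝ → ℝ)
    (hu : ContDiff ℝ k u) (hv : ContDiff ℝ k v) (x : ℝ) (hx : x ∈ Ω) :
    logOp T (fun y => u y + v y) x = logOp T u x + logOp T v x := by
  have := hleib _ _ hu.exp hv.exp x hx
  unfold logOp
  simp only [Real.exp_add]
  rw [this]
  have h1 := (Real.exp_pos (u x)).ne'
  have h2 := (Real.exp_pos (v x)).ne'
  field_simp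
  ring

/-- Away from the zeros of `f`, a Leibniz operator is `f` times a linear differential operator
applied to `log |f|` (recall that `Real.log y = log |y|`). Since `f` may be negative or vanish
elsewhere, `f ^ 2` is first made positive by a cutoff. -/
lemma leibniz_eq_log (hΩ : IsOpen Ω)
    (hcont : ∀ f, ContDiff ℝ k f → ContinuousOn (T f) Ω)
    (hleib : ∀ f g, ContDiff ℝ k f → ContDiff ℝ k g → ∀ x ∈ Ω,
      T (fun y => f y * g y) x = f x * T g x + g x * T f x)
    {f : ℝ → ℝ} (hf : ContDiff ℝ k f) {x : ℝ} (hx : x ∈ Ω) (hfx : f x ≠ 0) :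
    T f x = f x * ∑ i ∈ Finset.range (k + 1),
      jetCoeff (logOp T) i x * iteratedDeriv i (fun y => Real.log (f y)) x := by
  have hT := isLocalOp_of_leibniz hcont hleib
  obtain ⟨χ, hχ, hsupp, h0, hle, h1⟩ :=
    exists_cutoff (hf.continuous.continuousAt.eventually_ne hfx)
  set g : ℝ → ℝ := fun y => χ y * (f y * f y) + (1 - χ y) with hg
  have hgc : ContDiff ℝ k g :=
    ((hχ k).mul (hf.mul hf)).add (contDiff_const.sub (hχ k))
  have hgpos : ∀ y, 0 < g y := by
    intro y
    rcases (h0 y).eq_or_lt with h | h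
    · simp [hg, ← h]
    · have hy : f y ≠ 0 := hsupp (subset_tsupport _ h.ne')
      have h2 : 0 < χ y * (f y * f y) := mul_pos h (mul_self_pos.2 hy)
      have := hle y
      simp only [hg]
      linarith
  have hgf : g =ᶠ[𝓝 x] fun y => f y * f y := by
    filter_upwards [h1] with y hy
    simp [hg, hy]
  have hu : ContDiff ℝ k fun y => Real.log (g y) := hgc.log fun y => (hgpos y).ne'
  have hQ := (isLocalOp_logOp hT).eq_sum_jetCoeff hΩ (logOp_add hleib) hu hx
  have hlog : ∀ i, iteratedDeriv i (fun y => Real.log (g y)) x =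
      2 * iteratedDeriv i (fun y => Real.log (f y)) x := by
    intro i
    rw [← iteratedDeriv_const_mul_field]
    refine Filter.EventuallyEq.iteratedDeriv_eq i ?_
    filter_upwards [hgf, hf.continuous.continuousAt.eventually_ne hfx] with y hy hy0
    rw [hy, Real.log_mul hy0 hy0]
    ring
  have hexp : (fun y => Real.exp (Real.log (g y))) = g :=
    funext fun y => Real.exp_log (hgpos y)
  unfold logOp at hQ
  rw [hexp, Real.exp_log (hgpos x), hT.loc _ _ hgc (hf.mul hf) x hx hgf, hleib f f hf hf x hx,
    hgf.self_of_nhds] at hQ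
  change _ = ∑ i ∈ _, jetCoeff (logOp T) i x * _ at hQ
  simp only [hlog] at hQ
  have h3 : ∑ i ∈ Finset.range (k + 1), jetCoeff (logOp T) i x *
      (2 * iteratedDeriv i (fun y => Real.log (f y)) x) =
      2 * ∑ i ∈ Finset.range (k + 1), jetCoeff (logOp T) i x *
        iteratedDeriv i (fun y => Real.log (f y)) x := by
    rw [Finset.mul_sum]
    exact Finset.sum_congr rfl fun i _ => by ring
  rw [h3] at hQ
  field_simp at hQ
  linarith

/-- The coefficients of order at least `2` vanish. The image of `y ↦ y - a` is continuous at `a`,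
while off `a` it equals `∑ᵢ cᵢ (x) ℓᵢ (x - a) ^ (1 - i)` with `ℓᵢ ≠ 0`, so the most singular
coefficient must vanish at `a`. -/
lemma jetCoeff_logOp_eq_zero (hΩ : IsOpen Ω)
    (hcont : ∀ f, ContDiff ℝ k f → ContinuousOn (T f) Ω)
    (hleib : ∀ f g, ContDiff ℝ k f → ContDiff ℝ k g → ∀ x ∈ Ω,
      T (fun y => f y * g y) x = f x * T g x + g x * T f x)
    (hc0 : ∀ x ∈ Ω, jetCoeff (logOp T) 0 x = 0) (j : ℕ) :
    ∀ i, 2 ≤ i → i + j = k → ∀ a ∈ Ω, jetCoeff (logOp T) i a = 0 := by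
  have hT := isLocalOp_of_leibniz hcont hleib
  induction j using Nat.strong_induction_on with
  | _ j ih =>
  intro i hi hij a ha
  have hhigh : ∀ m, i < m → m ≤ k → ∀ x ∈ Ω, jetCoeff (logOp T) m x = 0 :=
    fun m hm hmk => ih (k - m) (by omega) m (by omega) (by omega)
  have haff : ContDiff ℝ k fun y : ℝ => y - a := contDiff_id.sub contDiff_const
  set G : ℝ → ℝ := fun x => ∑ m ∈ Finset.range (k + 1), jetCoeff (logOp T) m x *
    ((-1) ^ (m - 1) * ((m - 1).factorial : ℝ)) * (x - a) ^ (i - m) with hG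
  set H : ℝ → ℝ := fun x => (x - a) ^ (i - 1) * T (fun y => y - a) x with hH
  have hGc : ContinuousAt G a := by
    refine ContinuousOn.continuousAt (s := Ω) ?_ (hΩ.mem_nhds ha)
    refine continuousOn_finsetSum _ fun m _ => ContinuousOn.mul (ContinuousOn.mul
      (continuousOn_jetCoeff hΩ (isLocalOp_logOp hT) (logOp_add hleib) m) ?_) ?_
    · fun_prop
    · fun_prop
  have hHc : ContinuousAt H a := by
    refine ContinuousOn.continuousAt (s := Ω) ?_ (hΩ.mem_nhds ha)
    exact ContinuousOn.mul (by fun_prop) (hcont _ haff)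
  have hEq : ∀ x ∈ Ω, x ≠ a → H x = G x := by
    intro x hx hxa
    have hxa' : x - a ≠ 0 := sub_ne_zero.2 hxa
    simp only [hH, hG]
    rw [leibniz_eq_log hΩ hcont hleib haff hx hxa', ← mul_assoc, ← pow_succ,
      show i - 1 + 1 = i by omega, Finset.mul_sum]
    refine Finset.sum_congr rfl fun m hm => ?_
    rw [Finset.mem_range] at hm
    rcases Nat.eq_zero_or_pos m with rfl | hm0
    · rw [hc0 x hx]; ring
    by_cases him : i < m
    · rw [hhigh m him (by omega) x hx]; ring
    obtain ⟨n, rfl⟩ : ∃ n, m = n + 1 := ⟨m - 1, by omega⟩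
    have h1 := congrFun (iteratedDeriv_comp_sub_const (n + 1) Real.log a) x
    rw [h1, iteratedDeriv_log_succ]
    have h2 : (x - a) ^ i * (x - a) ^ (-1 - n : ℤ) = (x - a) ^ (i - (n + 1)) := by
      rw [← zpow_natCast, ← zpow_natCast, ← zpow_add₀ hxa']
      congr 1
      omega
    simp only [Nat.add_sub_cancel]
    rw [← h2]
    ring
  have hHG : H a = G a := by
    refine tendsto_nhds_unique_of_eventuallyEq (l := 𝓝[≠] a)
      (hHc.tendsto.mono_left nhdsWithin_le_nhds) (hGc.tendsto.mono_left nhdsWithin_le_nhds) ?_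
    filter_upwards [self_mem_nhdsWithin, nhdsWithin_le_nhds (hΩ.mem_nhds ha)] with x hx hxΩ
    exact hEq x hxΩ hx
  have hHa : H a = 0 := by
    simp only [hH, sub_self]
    rw [zero_pow (by omega), zero_mul]
  have hGa : G a = jetCoeff (logOp T) i a * ((-1) ^ (i - 1) * ((i - 1).factorial : ℝ)) := by
    simp only [hG, sub_self]
    rw [Finset.sum_eq_single_of_mem i (Finset.mem_range.2 (by omega))]
    · simp
    · intro m hm hmi
      rw [Finset.mem_range] at hm
      rcases lt_or_gt_of_ne hmi with h | h
      · rw [zero_pow (by omega), mul_zero]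
      · rw [hhigh m h (by omega) a ha]; ring
  rw [hHa, hGa] at hHG
  refine (mul_eq_zero.1 hHG.symm).resolve_right (mul_ne_zero (by simp) ?_)
  exact_mod_cast (i - 1).factorial_ne_zero

/-- A Leibniz operator on `C^k`, `1 ≤ k`, annihilating the constants is a first-order derivation,
even though it is not assumed to be additive. -/
lemma leibniz_eq_deriv (hΩ : IsOpen Ω) (hk : 1 ≤ k)
    (hcont : ∀ f, ContDiff ℝ k f → ContinuousOn (T f) Ω)
    (hleib : ∀ f g, ContDiff ℝ k f → ContDiff ℝ k g → ∀ x ∈ Ω,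
      T (fun y => f y * g y) x = f x * T g x + g x * T f x)
    (hconst : ∀ c : ℝ, ∀ x ∈ Ω, T (fun _ => c) x = 0)
    {f : ℝ → ℝ} (hf : ContDiff ℝ k f) {x : ℝ} (hx : x ∈ Ω) :
    T f x = T (fun y => y) x * deriv f x := by
  have hT := isLocalOp_of_leibniz hcont hleib
  have hc0 : ∀ x ∈ Ω, jetCoeff (logOp T) 0 x = 0 := by
    intro x hx
    simp [jetCoeff, logOp, hconst _ x hx]
  set c := jetCoeff (logOp T) 1 with hc
  have hcc : ContinuousOn c Ω :=
    continuousOn_jetCoeff hΩ (isLocalOp_logOp hT) (logOp_add hleib) 1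
  have hnz : ∀ f, ContDiff ℝ k f → ∀ x ∈ Ω, f x ≠ 0 → T f x = c x * deriv f x := by
    intro f hf x hx hfx
    rw [leibniz_eq_log hΩ hcont hleib hf hx hfx,
      Finset.sum_eq_single_of_mem 1 (Finset.mem_range.2 (by omega))]
    · have hd : DifferentiableAt ℝ f x :=
        (hf.differentiable (by exact_mod_cast (by omega : k ≠ 0))) x
      rw [iteratedDeriv_one, deriv.log hd hfx]
      field_simp
      rw [hc, mul_comm]
    · intro i hi hi1
      rw [Finset.mem_range] at hi
      rcases Nat.eq_zero_or_pos i with rfl | h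
      · rw [hc0 x hx, zero_mul]
      · rw [jetCoeff_logOp_eq_zero hΩ hcont hleib hc0 (k - i) i (by omega) (by omega) x hx,
          zero_mul]
  have hall : ∀ f, ContDiff ℝ k f → ∀ x ∈ Ω, T f x = c x * deriv f x := by
    intro f hf x hx
    by_cases hfr : ∃ᶠ y in 𝓝 x, f y ≠ 0
    · -- `x` is a limit of points where `f` does not vanish
      have hd : Continuous (deriv f) := hf.continuous_deriv (by exact_mod_cast hk)
      have h1 : ContinuousAt (T f) x := (hcont f hf).continuousAt (hΩ.mem_nhds hx)
      have h2 : ContinuousAt (fun y => c y * deriv f y) x :=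
        (hcc.continuousAt (hΩ.mem_nhds hx)).mul hd.continuousAt
      by_contra hne
      have hev := (h1.sub h2).eventually_ne (sub_ne_zero.2 hne)
      obtain ⟨y, hy0, hy1, hyΩ⟩ := (hfr.and_eventually (hev.and (hΩ.eventually_mem hx))).exists
      exact hy1 (sub_eq_zero.2 (hnz f hf y hyΩ hy0))
    · have hz : f =ᶠ[𝓝 x] fun _ => 0 := by
        filter_upwards [not_frequently.1 hfr] with y hy
        simpa using hy
      rw [hT.loc _ _ hf contDiff_const x hx hz, hconst 0 x hx, hz.deriv_eq]
      simp
  have hid := hall (fun y => y) contDiff_id x hx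
  rw [deriv_id'', mul_one] at hid
  rw [hall f hf x hx, hid]
end

/-! ### The second-order identity -/


/-- If `D : C^k(Ω) → C(Ω)` satisfies the identity (★) and annihilates all
polynomials of degree at most `1` (i.e. `D(f) = 0` on `Ω` whenever `f` agrees on `Ω` with an
affine map `x ↦ a·x + b`), then there is a continuous `c₂ : Ω → ℝ` with
`D(f)(x) = c₂(x)·f''(x)` for all `f ∈ C^k(Ω)`, `x ∈ Ω`; moreover if `k ∈ {0, 1}` then
`c₂ = 0`, i.e. `D = 0` on `Ω`.  (The statement is formulated for every nonnegative integer
`k`, the clause for `k ∈ {0, 1}` being recorded as an implication.) -/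
theorem statement16 (k : ℕ) (Ω : Set ℝ) (hΩ : IsOpen Ω) (hΩne : Ω.Nonempty)
    (D : (ℝ → ℝ) → (ℝ → ℝ))
    (hmap : ∀ f : ℝ → ℝ, ContDiffOn ℝ k f Ω → ContinuousOn (D f) Ω)
    (hstar : ∀ f g h : ℝ → ℝ,
      ContDiffOn ℝ k f Ω → ContDiffOn ℝ k g Ω → ContDiffOn ℝ k h Ω →
      ∀ x ∈ Ω,
        D (fun y => f y * g y * h y) x
          - f x * D (fun y => g y * h y) x
          - g x * D (fun y => f y * h y) x
          - h x * D (fun y => f y * g y) x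
          + f x * g x * D h x
          + f x * h x * D g x
          + g x * h x * D f x = 0)
    (hannih : ∀ (f : ℝ → ℝ) (a b : ℝ), ContDiffOn ℝ k f Ω →
      (∀ x ∈ Ω, f x = a * x + b) → ∀ x ∈ Ω, D f x = 0) :
    ∃ c₂ : ℝ → ℝ,
      ContinuousOn c₂ Ω ∧
      (∀ f : ℝ → ℝ, ContDiffOn ℝ k f Ω → ∀ x ∈ Ω, D f x = c₂ x * deriv (deriv f) x) ∧
      (k = 0 ∨ k = 1 → c₂ = 0) := by
  -- locality of `D`, from the identity with both other arguments equal to a cutoff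
  have hloc : ∀ f g : ℝ → ℝ, ContDiffOn ℝ k f Ω → ContDiffOn ℝ k g Ω → ∀ x ∈ Ω,
      f =ᶠ[𝓝 x] g → D f x = D g x := by
    intro f g hf hg x hx hfg
    obtain ⟨χ, hχ, hsupp, -, -, h1⟩ := exists_cutoff hfg
    have heq : (fun y => f y * χ y) = fun y => g y * χ y := by
      ext y
      by_cases hy : y ∈ tsupport χ
      · have : f y = g y := hsupp hy
        rw [this]
      · simp [image_eq_zero_of_notMem_tsupport hy]
    have heq2 : (fun y => f y * χ y * χ y) = fun y => g y * χ y * χ y :=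
      funext fun y => congrArg (· * χ y) (congrFun heq y)
    have hf1 := hstar f χ χ hf (hχ k).contDiffOn (hχ k).contDiffOn x hx
    have hg1 := hstar g χ χ hg (hχ k).contDiffOn (hχ k).contDiffOn x hx
    rw [heq, heq2, hfg.self_of_nhds, h1.self_of_nhds] at hf1
    rw [h1.self_of_nhds] at hg1
    linarith
  have hD : IsLocalOp k Ω D :=
    ⟨fun f hf => hmap f hf.contDiffOn,
      fun f g hf hg => hloc f g hf.contDiffOn hg.contDiffOn⟩
  have haff : ∀ a b : ℝ, ∀ x ∈ Ω, D (fun y => a * y + b) x = 0 := fun a b =>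
    hannih _ a b (by fun_prop) fun _ _ => rfl
  have hDc : ∀ c : ℝ, ∀ x ∈ Ω, D (fun _ => c) x = 0 := fun c =>
    hannih _ 0 c contDiffOn_const fun _ _ => by ring
  -- it suffices to treat functions that are `C^k` on the whole line
  suffices hmain : ∃ c₂ : ℝ → ℝ, ContinuousOn c₂ Ω ∧
      (∀ f : ℝ → ℝ, ContDiff ℝ k f → ∀ x ∈ Ω, D f x = c₂ x * deriv (deriv f) x) ∧
      (k = 0 ∨ k = 1 → c₂ = 0) by
    obtain ⟨c₂, hc, hf, h01⟩ := hmain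
    refine ⟨c₂, hc, fun f hfk x hx => ?_, h01⟩
    obtain ⟨χ, hχ, hsupp, -, -, h1⟩ := exists_cutoff (hΩ.mem_nhds hx)
    have hg : ContDiff ℝ k fun y => χ y * f y := by
      refine contDiff_iff_contDiffAt.2 fun y => ?_
      by_cases hy : y ∈ tsupport χ
      · exact (hχ k).contDiffAt.mul (hfk.contDiffAt (hΩ.mem_nhds (hsupp hy)))
      · refine (contDiffAt_const (c := (0 : ℝ))).congr_of_eventuallyEq ?_
        filter_upwards [notMem_tsupport_iff_eventuallyEq.1 hy] with z hz
        simp [hz]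
    have hgf : (fun y => χ y * f y) =ᶠ[𝓝 x] f := by
      filter_upwards [h1] with y hy
      rw [hy, one_mul]
    rw [← hloc _ _ hg.contDiffOn hfk x hx hgf, hf _ hg x hx, hgf.deriv.deriv_eq]
  rcases Nat.lt_or_ge k 2 with hk | hk
  · -- for `k ≤ 1` every `f` has the same `k`-jet at `x` as an affine function
    refine ⟨0, continuousOn_const, fun f hf x hx => ?_, fun _ => rfl⟩
    rw [Pi.zero_apply, zero_mul, ← haff (deriv f x) (f x - deriv f x * x) x hx]
    refine hD.jet hΩ hf (by fun_prop) hx fun i hi => ?_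
    obtain rfl | rfl : i = 0 ∨ i = 1 := by omega
    · simp
    · simp [iteratedDeriv_one]
  -- `B` measures the failure of the Leibniz rule; the identity says it is Leibniz in each argument
  set B : (ℝ → ℝ) → (ℝ → ℝ) → ℝ → ℝ := fun h f x =>
    D (fun y => f y * h y) x - f x * D h x - h x * D f x with hB
  have hBsymm : ∀ f h, B f h = B h f := by
    intro f h
    ext x
    simp only [hB, mul_comm (f _) (h _)]
    ring
  have hBcont : ∀ h, ContDiff ℝ k h → ∀ f, ContDiff ℝ k f → ContinuousOn (B h f) Ω :=
    fun h hh f hf => ((hD.cont _ (hf.mul hh)).sub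
      (hf.continuous.continuousOn.mul (hD.cont _ hh))).sub
      (hh.continuous.continuousOn.mul (hD.cont _ hf))
  have hBleib : ∀ h, ContDiff ℝ k h → ∀ f g, ContDiff ℝ k f → ContDiff ℝ k g → ∀ x ∈ Ω,
      B h (fun y => f y * g y) x = f x * B h g x + g x * B h f x := by
    intro h hh f g hf hg x hx
    have := hstar f g h hf.contDiffOn hg.contDiffOn hh.contDiffOn x hx
    simp only [hB]
    linear_combination this
  have hBcc : ∀ c d : ℝ, ∀ x ∈ Ω, B (fun _ => c) (fun _ => d) x = 0 := by
    intro c d x hx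
    simp only [hB]
    rw [hDc _ x hx, hDc _ x hx, hDc _ x hx]
    ring
  have hBc : ∀ c : ℝ, ∀ f, ContDiff ℝ k f → ∀ x ∈ Ω, B (fun _ => c) f x = 0 := by
    intro c f hf x hx
    have hcx : B (fun _ => c) (fun y => y) x = 0 := by
      have h1 := haff c 0 x hx
      have h2 := haff 1 0 x hx
      simp only [add_zero, one_mul] at h1 h2
      simp only [hB, mul_comm _ c]
      rw [h1, h2, hDc _ x hx]
      ring
    rw [leibniz_eq_deriv hΩ (by omega) (hBcont _ contDiff_const) (hBleib _ contDiff_const)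
      (hBcc c) hf hx, hcx, zero_mul]
  have hBd : ∀ f h, ContDiff ℝ k f → ContDiff ℝ k h → ∀ x ∈ Ω,
      B h f x = B (fun y => y) (fun y => y) x * deriv h x * deriv f x := by
    intro f h hf hh x hx
    have hk1 : 1 ≤ k := by omega
    rw [leibniz_eq_deriv hΩ hk1 (hBcont h hh) (hBleib h hh)
      (fun c y hy => by rw [hBsymm]; exact hBc c h hh y hy) hf hx, hBsymm h,
      leibniz_eq_deriv hΩ hk1 (hBcont (fun y => y) contDiff_id) (hBleib _ contDiff_id)
      (fun c y hy => by rw [hBsymm]; exact hBc c _ contDiff_id y hy) hh hx]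
  set d : ℝ → ℝ := B (fun y => y) (fun y => y) with hd
  have hdc : ContinuousOn d Ω := hBcont _ contDiff_id _ contDiff_id
  refine ⟨fun x => d x / 2, hdc.div_const 2, fun f hf x hx => ?_, by omega⟩
  have hdiff : ∀ f : ℝ → ℝ, ContDiff ℝ k f → Differentiable ℝ f := fun f hf =>
    hf.differentiable (by exact_mod_cast (by omega : k ≠ 0))
  have hcd : ∀ f : ℝ → ℝ, ContDiff ℝ k f → ContDiff ℝ 1 (deriv f) := fun f hf =>
    ((contDiff_succ_iff_deriv (n := 1)).1
      (hf.of_le (by rw [one_add_one_eq_two]; exact_mod_cast hk))).2.2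
  -- subtracting the second-order part leaves a Leibniz operator annihilating affine functions
  set E : (ℝ → ℝ) → ℝ → ℝ := fun f x => D f x - d x / 2 * deriv (deriv f) x with hE
  have hE0 : E f x = E (fun y => y) x * deriv f x := by
    refine leibniz_eq_deriv hΩ (by omega) (fun f hf => ?_) (fun f g hf hg y hy => ?_)
      (fun c y hy => ?_) hf hx
    · exact (hD.cont f hf).sub ((hdc.div_const 2).mul
        ((hcd f hf).continuous_deriv le_rfl).continuousOn)
    · have h1 := hBd f g hf hg y hy
      have hder : deriv (fun z => f z * g z) = fun z => deriv f z * g z + f z * deriv g z :=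
        funext fun z => deriv_fun_mul (hdiff f hf z) (hdiff g hg z)
      have hf' := (hcd f hf).differentiable one_ne_zero y
      have hg' := (hcd g hg).differentiable one_ne_zero y
      have hder2 : deriv (deriv fun z => f z * g z) y =
          deriv (deriv f) y * g y + 2 * (deriv f y * deriv g y) + f y * deriv (deriv g) y := by
        rw [hder]
        refine HasDerivAt.deriv ?_
        convert (hf'.hasDerivAt.fun_mul (hdiff g hg y).hasDerivAt).fun_add
          ((hdiff f hf y).hasDerivAt.fun_mul hg'.hasDerivAt) using 1
        ring
      simp only [hE, hder2]
      simp only [hB] at h1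
      linear_combination h1
    · simp [hE, hDc c y hy]
  have hEid : E (fun y => y) x = 0 := by
    have h2 := haff 1 0 x hx
    simp only [add_zero, one_mul] at h2
    simp [hE, h2]
  rw [hEid, zero_mul] at hE0
  simp only [hE] at hE0
  linarith
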